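/- arXiv:2412.21125 — 5 statements merged into one kernel-verified Lean document; each statement's English description precedes it below -/
import Mathlib

section
/- Let X be a nonempty closed subset of ℝⁿ, H a finitely constrained hypothesis on X, and Φ : X → ℝᵐ a constraint for H. A closed set S ⊆ X is compatible for H (i.e. some P ∈ H has support contained in S) if and only if 0 lies in the convex hull of Φ(S). In that case, the restriction H_S = H ∩ P_S is a finitely constrained hypothesis on S with constraint the restriction Φ|_S; in particular H_S = {P ∈ P_Φ ∩ P_S : ⟨P, Φ|_S⟩ = 0}. -/
open MeasureTheory Set ENNReal

noncomputable section

/-- The (topological) support of a Borel measure: the set of points all of whose open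
neighbourhoods have positive measure. -/
def msupport {α : Type*} [TopologicalSpace α] [MeasurableSpace α]
    (P : Measure α) : Set α :=
  {x | ∀ U : Set α, IsOpen U → x ∈ U → 0 < P U}

variable {α : Type*} [TopologicalSpace α] [MeasurableSpace α] {X : Set α} {m : ℕ}

/-- A hypothesis on `X`: a nonempty set of Borel probability measures (on `X`,
identified with the Borel probability measures supported in `X`). -/
def IsHypothesis (H : Set (Measure X)) : Prop :=
  H.Nonempty ∧ ∀ P ∈ H, IsProbabilityMeasure P

/-- An e-variable with respect to `H`: a Borel measurable nonnegative function whose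
expectation is at most one under every `P ∈ H`. -/
def IsEVar (H : Set (Measure X)) (E : X → ℝ) : Prop :=
  Measurable E ∧ (∀ x, 0 ≤ E x) ∧ ∀ P ∈ H, ∫⁻ x, ENNReal.ofReal (E x) ∂P ≤ 1

/-- `f` majorises `g` if `f(x) ≥ g(x)` for every `x ∈ X`. -/
def Majorises (f g : X → ℝ) : Prop := ∀ x, g x ≤ f x

/-- A maximal e-variable: an e-variable with no strict majoriser among e-variables. -/
def IsMaximalEVar (H : Set (Measure X)) (E : X → ℝ) : Prop :=
  IsEVar H E ∧ ¬ ∃ E', IsEVar H E' ∧ Majorises E' E ∧ E' ≠ E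

/-- A majorising e-class: an e-class such that every e-variable is majorised by
one of its elements. -/
def IsMajorisingClass (H : Set (Measure X)) (C : Set (X → ℝ)) : Prop :=
  (∀ E ∈ C, IsEVar H E) ∧ ∀ E, IsEVar H E → ∃ E' ∈ C, Majorises E' E

/-- The optimal e-class: a majorising e-class contained in every majorising e-class. -/
def IsOptimalClass (H : Set (Measure X)) (C : Set (X → ℝ)) : Prop :=
  IsMajorisingClass H C ∧ ∀ C', IsMajorisingClass H C' → C ⊆ C'

/-- `P ∈ P_Φ`: the expectation of the ℓ¹-norm of `Φ` under `P` is finite. -/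
def MemPPhi (P : Measure X) (Φ : X → Fin m → ℝ) : Prop :=
  ∫⁻ x, ENNReal.ofReal (∑ i, |Φ x i|) ∂P < ⊤

/-- `Φ` is a constraint for `H`: `Φ` is continuous and `H` is exactly the set of Borel
probability measures `P ∈ P_Φ` with `⟨P, Φ⟩ = 0`. -/
def IsConstraint (H : Set (Measure X)) (Φ : X → Fin m → ℝ) : Prop :=
  Continuous Φ ∧
    H = {P : Measure X | IsProbabilityMeasure P ∧ MemPPhi P Φ ∧ ∫ x, Φ x ∂P = 0}

/-- A proper constraint: a constraint such that `0` lies in the relative interior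
of the convex hull of the image of `Φ`. -/
def IsProperConstraint (H : Set (Measure X)) (Φ : X → Fin m → ℝ) : Prop :=
  IsConstraint H Φ ∧
    (0 : Fin m → ℝ) ∈ intrinsicInterior ℝ (convexHull ℝ (Set.range Φ))

/-- A minimal constraint: a constraint such that `0` lies in the interior
of the convex hull of the image of `Φ`. -/
def IsMinimalConstraint (H : Set (Measure X)) (Φ : X → Fin m → ℝ) : Prop :=
  IsConstraint H Φ ∧
    (0 : Fin m → ℝ) ∈ interior (convexHull ℝ (Set.range Φ))

/-- A finitely constrained hypothesis: one admitting a constraint. -/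
def FinitelyConstrained (H : Set (Measure X)) : Prop :=
  ∃ (m : ℕ) (Φ : X → Fin m → ℝ), IsConstraint H Φ

/-- A properly constrained hypothesis: one admitting a proper constraint. -/
def ProperlyConstrained (H : Set (Measure X)) : Prop :=
  ∃ (m : ℕ) (Φ : X → Fin m → ℝ), IsProperConstraint H Φ

/-- `Λ_{Φ|S} = {λ ∈ ℝᵐ : sup_{x ∈ S} λ·Φ(x) ≤ 1}`. -/
def LambdaSet (Φ : X → Fin m → ℝ) (S : Set X) : Set (Fin m → ℝ) :=
  {l | ∀ x ∈ S, ∑ i, l i * Φ x i ≤ 1}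

/-- The dual e-class `E_H^∨ = {1 - λ·Φ : λ ∈ Λ_Φ}`. -/
def dualClass (Φ : X → Fin m → ℝ) : Set (X → ℝ) :=
  {E | ∃ l ∈ LambdaSet Φ Set.univ, E = fun x => 1 - ∑ i, l i * Φ x i}

/-- A matching set for `H`: a closed set that is exactly the support of some `P ∈ H`. -/
def IsMatchingSet (H : Set (Measure X)) (S : Set X) : Prop :=
  IsClosed S ∧ ∃ P ∈ H, msupport P = S

end

theorem exists_nonneg_functional {E : Type} [NormedAddCommGroup E] [NormedSpace ℝ E]
    [FiniteDimensional ℝ E] (C : Set E) (hC : Convex ℝ C) (hne : C.Nonempty)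
    (h0 : (0 : E) ∉ C) : ∃ l : E →L[ℝ] ℝ, l ≠ 0 ∧ ∀ x ∈ C, 0 ≤ l x := by
  by_cases hi : (interior C).Nonempty
  · obtain ⟨l, hl⟩ := geometric_hahn_banach_point_open hC.interior isOpen_interior
      (fun h => h0 (interior_subset h))
    simp only [map_zero] at hl
    refine ⟨l, ?_, ?_⟩
    · rintro rfl
      obtain ⟨x, hx⟩ := hi
      simpa using hl x hx
    · intro x hx
      have h1 : x ∈ closure (interior C) := by
        rw [hC.closure_interior_eq_closure_of_nonempty_interior hi]
        exact subset_closure hx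
      have h2 : closure (interior C) ⊆ {y | 0 ≤ l y} :=
        closure_minimal (fun y hy => (hl y hy).le)
          (isClosed_le continuous_const l.continuous)
      exact h2 h1
  · obtain ⟨c, hc⟩ := hne
    have hA : affineSpan ℝ C ≠ ⊤ := fun h =>
      hi (hC.interior_nonempty_iff_affineSpan_eq_top.2 h)
    have hd : (affineSpan ℝ C).direction < ⊤ := by
      rw [lt_top_iff_ne_top]
      intro h
      exact hA ((AffineSubspace.direction_eq_top_iff_of_nonempty
        ⟨c, subset_affineSpan ℝ C hc⟩).1 h)
    obtain ⟨f, hf, hk⟩ := Submodule.exists_le_ker_of_lt_top _ hd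
    have hconst : ∀ x ∈ C, f x = f c := by
      intro x hx
      have h1 : x - c ∈ (affineSpan ℝ C).direction :=
        AffineSubspace.vsub_mem_direction (subset_affineSpan ℝ C hx) (subset_affineSpan ℝ C hc)
      have h2 := hk h1
      rw [LinearMap.mem_ker, map_sub] at h2
      linarith
    have hf' : LinearMap.toContinuousLinearMap f ≠ 0 := by
      intro h
      apply hf
      ext x
      exact congrArg (fun g : E →L[ℝ] ℝ => g x) h
    rcases le_total 0 (f c) with h | h
    · refine ⟨LinearMap.toContinuousLinearMap f, hf', fun x hx => ?_⟩
      simpa [hconst x hx] using h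
    · refine ⟨-LinearMap.toContinuousLinearMap f, neg_ne_zero.2 hf', fun x hx => ?_⟩
      simpa [hconst x hx] using h

theorem zero_mem_of_integral {Ω : Type} [MeasurableSpace Ω] (P : Measure Ω)
    [IsProbabilityMeasure P] (k : ℕ) :
    ∀ (E : Type) [NormedAddCommGroup E] [NormedSpace ℝ E] [FiniteDimensional ℝ E]
      (_ : Module.finrank ℝ E ≤ k) (C : Set E) (_ : Convex ℝ C) (f : Ω → E)
      (_ : Integrable f P) (_ : ∀ᵐ x ∂P, f x ∈ C) (_ : ∫ x, f x ∂P = 0), (0 : E) ∈ C := by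
  induction k with
  | zero =>
    intro E _ _ _ hk C hC f hf hfC h0
    obtain ⟨x, hx⟩ := hfC.exists
    have : Subsingleton E := Module.finrank_zero_iff.1 (Nat.le_zero.1 hk)
    rwa [Subsingleton.elim (0 : E) (f x)]
  | succ k ih =>
    intro E _ _ _ hk C hC f hf hfC h0
    by_contra hn
    obtain ⟨x0, hx0⟩ := hfC.exists
    obtain ⟨l, hl, hpos⟩ := exists_nonneg_functional C hC ⟨_, hx0⟩ hn
    have hli : ∫ x, l (f x) ∂P = 0 := by
      rw [l.integral_comp_comm hf, h0, map_zero]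
    have hae : ∀ᵐ x ∂P, l (f x) = 0 := by
      have := (integral_eq_zero_iff_of_nonneg_ae (f := fun x => l (f x)) (μ := P)
        (hfC.mono fun x hx => hpos _ hx) (l.integrable_comp hf)).1 hli
      exact this
    set K : Submodule ℝ E := LinearMap.ker (l : E →ₗ[ℝ] ℝ) with hK
    obtain ⟨p, hp⟩ := K.exists_isCompl.imp fun q hq => hq
    obtain ⟨π, hπ⟩ : ∃ π : E →ₗ[ℝ] K, ∀ x : K, π x = x :=
      ⟨K.linearProjOfIsCompl p hp, fun x => Submodule.linearProjOfIsCompl_apply_left hp x⟩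
    let π' : E →L[ℝ] K := LinearMap.toContinuousLinearMap π
    have hKlt : K < ⊤ := by
      rw [lt_top_iff_ne_top]
      intro h
      apply hl
      ext x
      have : x ∈ K := h ▸ Submodule.mem_top
      simpa [hK] using this
    have hfr : Module.finrank ℝ K ≤ k := by
      have := Submodule.finrank_lt hKlt.ne
      omega
    have := ih K hfr (K.subtype ⁻¹' C) (hC.linear_preimage K.subtype) (fun x => π' (f x))
      (π'.integrable_comp hf) ?_ ?_
    · exact hn (by simpa using this)
    · filter_upwards [hfC, hae] with x hx hx'
      have h1 : f x ∈ K := by simpa [hK] using hx'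
      have h2 : π' (f x) = ⟨f x, h1⟩ := hπ ⟨f x, h1⟩
      simpa [h2] using hx
    · rw [π'.integral_comp_comm hf, h0, map_zero]

theorem integrable_of_memPPhi {n m : ℕ} {X : Set (EuclideanSpace ℝ (Fin n))}
    (Φ : X → Fin m → ℝ) (hΦ : Continuous Φ) (P : Measure X) (h : MemPPhi P Φ) :
    Integrable Φ P := by
  refine ⟨hΦ.aestronglyMeasurable, ?_⟩
  rw [hasFiniteIntegral_iff_norm]
  refine lt_of_le_of_lt (lintegral_mono fun x => ENNReal.ofReal_le_ofReal ?_) h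
  rw [pi_norm_le_iff_of_nonneg (Finset.sum_nonneg fun i _ => abs_nonneg _)]
  intro i
  exact Finset.single_le_sum (f := fun i => |Φ x i|) (fun i _ => abs_nonneg _)
    (Finset.mem_univ i)

theorem msupport_subset_iff_null {n : ℕ} {X : Set (EuclideanSpace ℝ (Fin n))}
    (P : Measure X) (S : Set X) (hS : IsClosed S) : msupport P ⊆ S ↔ P Sᶜ = 0 := by
  constructor
  · intro h
    apply measure_null_of_locally_null
    intro x hx
    have : x ∉ msupport P := fun h' => hx (h h')
    simp only [msupport, mem_setOf_eq, not_forall, not_lt, nonpos_iff_eq_zero] at this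
    obtain ⟨U, hU, hxU, h0⟩ := this
    exact ⟨U, mem_nhdsWithin_of_mem_nhds (hU.mem_nhds hxU), h0⟩
  · intro h x hx
    by_contra hn
    exact (hx Sᶜ hS.isOpen_compl hn).ne' h

theorem exists_of_mem_hull {n m : ℕ} {X : Set (EuclideanSpace ℝ (Fin n))}
    (Φ : X → Fin m → ℝ) (hΦ : Continuous Φ) (S : Set X) (hS : IsClosed S) (v : Fin m → ℝ)
    (hv : v ∈ convexHull ℝ (Φ '' S)) :
    ∃ P : Measure X, IsProbabilityMeasure P ∧ MemPPhi P Φ ∧ P Sᶜ = 0 ∧ ∫ x, Φ x ∂P = v := by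
  have key : convexHull ℝ (Φ '' S) ⊆ {v | ∃ P : Measure X, IsProbabilityMeasure P ∧
      MemPPhi P Φ ∧ P Sᶜ = 0 ∧ ∫ x, Φ x ∂P = v} := by
    apply convexHull_min
    · rintro _ ⟨x, hx, rfl⟩
      refine ⟨Measure.dirac x, inferInstance, ?_, ?_, ?_⟩
      · simp [MemPPhi, lintegral_dirac]
      · rw [Measure.dirac_apply' _ hS.measurableSet.compl]
        simp [hx]
      · simp
    · rintro _ ⟨P, hP, hPm, hPS, rfl⟩ _ ⟨Q, hQ, hQm, hQS, rfl⟩ a b ha hb hab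
      have hPi := integrable_of_memPPhi Φ hΦ P hPm
      have hQi := integrable_of_memPPhi Φ hΦ Q hQm
      refine ⟨ENNReal.ofReal a • P + ENNReal.ofReal b • Q, ⟨?_⟩, ?_, ?_, ?_⟩
      · simp [← ENNReal.ofReal_add ha hb, hab]
      · unfold MemPPhi at *
        rw [lintegral_add_measure, lintegral_smul_measure, lintegral_smul_measure]
        exact ENNReal.add_lt_top.2 ⟨ENNReal.mul_lt_top ENNReal.ofReal_lt_top hPm,
          ENNReal.mul_lt_top ENNReal.ofReal_lt_top hQm⟩
      · simp [hPS, hQS]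
      · rw [integral_add_measure (hPi.smul_measure ENNReal.ofReal_ne_top)
          (hQi.smul_measure ENNReal.ofReal_ne_top), integral_smul_measure,
          integral_smul_measure, ENNReal.toReal_ofReal ha, ENNReal.toReal_ofReal hb]
  exact key hv

/-- a closed `S ⊆ X` is compatible for a finitely constrained `H`
(some `P ∈ H` is supported in `S`) iff `0 ∈ conv Φ(S)`; in that case, the restriction
`H_S = H ∩ P_S` is nonempty (a hypothesis on `S`) and is finitely constrained with
constraint `Φ|_S`, i.e. `H_S = {P ∈ P_Φ ∩ P_S : ⟨P, Φ|_S⟩ = 0}`. -/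
theorem statement15 {n m : ℕ} {X : Set (EuclideanSpace ℝ (Fin n))}
    (hXc : IsClosed X) (hXne : X.Nonempty)
    (H : Set (Measure X)) (hHne : H.Nonempty)
    (Φ : X → Fin m → ℝ) (hΦ : IsConstraint H Φ)
    (S : Set X) (hS : IsClosed S) :
    ((∃ P ∈ H, msupport P ⊆ S) ↔ (0 : Fin m → ℝ) ∈ convexHull ℝ (Φ '' S)) ∧
    ((∃ P ∈ H, msupport P ⊆ S) →
      ({P | P ∈ H ∧ msupport P ⊆ S}.Nonempty ∧
        {P | P ∈ H ∧ msupport P ⊆ S} =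
          {P : Measure X | IsProbabilityMeasure P ∧ MemPPhi P Φ ∧ msupport P ⊆ S ∧
            ∫ x, Φ x ∂P = 0})) := by
  obtain ⟨hc, rfl⟩ := hΦ
  refine ⟨⟨?_, ?_⟩, ?_⟩
  · rintro ⟨P, ⟨hP, hPm, h0⟩, hs⟩
    rw [msupport_subset_iff_null P S hS] at hs
    refine zero_mem_of_integral P _ (Fin m → ℝ) le_rfl _ (convex_convexHull ℝ _) Φ
      (integrable_of_memPPhi Φ hc P hPm) ?_ h0
    have : ∀ᵐ x ∂P, x ∈ S := hs
    filter_upwards [this] with x hx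
    exact subset_convexHull ℝ _ ⟨x, hx, rfl⟩
  · intro h
    obtain ⟨P, hP, hPm, hPS, h0⟩ := exists_of_mem_hull Φ hc S hS 0 h
    exact ⟨P, ⟨hP, hPm, h0⟩, (msupport_subset_iff_null P S hS).2 hPS⟩
  · intro h
    refine ⟨h, ?_⟩
    ext P
    simp only [mem_setOf_eq]
    tauto
end

section
/- Let X be a nonempty closed subset of ℝⁿ and H a properly constrained hypothesis on X. Then any finite union of matching sets for H is a matching set for H, and every finite subset of X is contained in a finite matching set for H. -/
open MeasureTheory Set ENNReal

lemma msupp_mix {Y : Type*} [TopologicalSpace Y] [MeasurableSpace Y]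
    (P Q : Measure Y) (a b : ℝ≥0∞) (ha : a ≠ 0) (hb : b ≠ 0) :
    msupport (a • P + b • Q) = msupport P ∪ msupport Q := by
  have key : ∀ U : Set Y, 0 < (a • P + b • Q) U ↔ (0 < P U ∨ 0 < Q U) := by
    intro U
    simp only [Measure.add_apply, Measure.smul_apply, smul_eq_mul, pos_iff_ne_zero, ne_eq,
      add_eq_zero, mul_eq_zero, ha, hb, false_or]
    tauto
  ext x
  simp only [msupport, mem_setOf_eq, mem_union, key]
  constructor
  · intro h
    by_contra! hc
    obtain ⟨⟨U, hU, hxU, hU0⟩, ⟨V, hV, hxV, hV0⟩⟩ := hc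
    rcases h (U ∩ V) (hU.inter hV) ⟨hxU, hxV⟩ with h | h
    · exact absurd (h.trans_le (measure_mono inter_subset_left)) (not_lt.2 hU0)
    · exact absurd (h.trans_le (measure_mono inter_subset_right)) (not_lt.2 hV0)
  · rintro (h | h) U hU hx
    · exact Or.inl (h U hU hx)
    · exact Or.inr (h U hU hx)

/-- `P` is a probability measure, `Φ` is integrable with mean `y`. -/
def GoodM {Y : Type*} [MeasurableSpace Y] {m : ℕ} (Φ : Y → Fin m → ℝ) (P : Measure Y)
    (y : Fin m → ℝ) : Prop :=
  IsProbabilityMeasure P ∧ Integrable Φ P ∧ ∫ x, Φ x ∂P = y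

lemma GoodM.mix {Y : Type*} [MeasurableSpace Y] {m : ℕ} {Φ : Y → Fin m → ℝ} {P Q : Measure Y}
    {y z : Fin m → ℝ} (hP : GoodM Φ P y) (hQ : GoodM Φ Q z) {a b : ℝ} (ha : 0 < a) (hb : 0 < b)
    (hab : a + b = 1) :
    GoodM Φ (ENNReal.ofReal a • P + ENNReal.ofReal b • Q) (a • y + b • z) := by
  obtain ⟨hP1, hP2, hP3⟩ := hP
  obtain ⟨hQ1, hQ2, hQ3⟩ := hQ
  have i1 := hP2.smul_measure (c := ENNReal.ofReal a) ENNReal.ofReal_ne_top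
  have i2 := hQ2.smul_measure (c := ENNReal.ofReal b) ENNReal.ofReal_ne_top
  refine ⟨⟨?_⟩, i1.add_measure i2, ?_⟩
  · simp [← ENNReal.ofReal_add ha.le hb.le, hab]
  · rw [integral_add_measure i1 i2, integral_smul_measure, integral_smul_measure, hP3, hQ3,
      ENNReal.toReal_ofReal ha.le, ENNReal.toReal_ofReal hb.le]

lemma goodM_dirac {Y : Type*} [TopologicalSpace Y] [T1Space Y] [MeasurableSpace Y] [BorelSpace Y]
    {m : ℕ} {Φ : Y → Fin m → ℝ} (x : Y) :
    GoodM Φ (Measure.dirac x) (Φ x) :=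
  ⟨inferInstance, integrable_dirac (by simp [enorm]), integral_dirac _ _⟩

lemma msupp_dirac {Y : Type*} [TopologicalSpace Y] [T1Space Y] [MeasurableSpace Y] [BorelSpace Y]
    (x : Y) : msupport (Measure.dirac x) = {x} := by
  ext y
  simp only [msupport, mem_setOf_eq, mem_singleton_iff]
  constructor
  · intro h
    by_contra hne
    have := h {x}ᶜ isOpen_compl_singleton hne
    simp at this
  · rintro rfl U hU hy
    simp [Measure.dirac_apply_of_mem hy]

lemma goodM_hull {Y : Type*} [TopologicalSpace Y] [T1Space Y] [MeasurableSpace Y] [BorelSpace Y]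
    {m : ℕ} {Φ : Y → Fin m → ℝ} {y : Fin m → ℝ} (hy : y ∈ convexHull ℝ (range Φ)) :
    ∃ P : Measure Y, GoodM Φ P y ∧ (msupport P).Finite := by
  refine convexHull_min (t := {y | ∃ P : Measure Y, GoodM Φ P y ∧ (msupport P).Finite}) ?_ ?_ hy
  · rintro _ ⟨x, rfl⟩
    exact ⟨_, goodM_dirac x, by simp [msupp_dirac]⟩
  · rw [convex_iff_forall_pos]
    rintro u ⟨P, hP, hPf⟩ v ⟨Q, hQ, hQf⟩ a b ha hb hab
    refine ⟨_, hP.mix hQ ha hb hab, ?_⟩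
    rw [msupp_mix _ _ _ _ (by simpa using ha) (by simpa using hb)]
    exact hPf.union hQf

lemma relint_neg {m : ℕ} {C : Set (Fin m → ℝ)} (h0 : (0 : Fin m → ℝ) ∈ intrinsicInterior ℝ C)
    {v : Fin m → ℝ} (hv : v ∈ C) : ∃ t : ℝ, 0 < t ∧ -(t • v) ∈ C := by
  obtain ⟨z, hz, hz0⟩ := mem_intrinsicInterior.1 h0
  have hmem : ∀ t : ℝ, -(t • v) ∈ affineSpan ℝ C := by
    intro t
    have h1 : (0 : Fin m → ℝ) ∈ affineSpan ℝ C := hz0 ▸ z.2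
    have := AffineMap.lineMap_mem (-t) h1 (subset_affineSpan ℝ C hv)
    simpa [AffineMap.lineMap_apply] using this
  let g : ℝ → affineSpan ℝ C := fun t => ⟨-(t • v), hmem t⟩
  have hg : Continuous g := by
    apply Continuous.subtype_mk
    fun_prop
  have hg0 : g 0 = z := Subtype.ext (by simp [g, hz0])
  have hopen : IsOpen (g ⁻¹' interior ((↑) ⁻¹' C : Set (affineSpan ℝ C))) :=
    isOpen_interior.preimage hg
  obtain ⟨e, he, hball⟩ := Metric.isOpen_iff.1 hopen 0 (by rw [mem_preimage, hg0]; exact hz)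
  refine ⟨e / 2, by positivity, ?_⟩
  have : e / 2 ∈ Metric.ball (0 : ℝ) e := by
    rw [Metric.mem_ball, Real.dist_eq, sub_zero, abs_of_pos (by positivity)]
    linarith
  have h2 : g (e / 2) ∈ ((↑) ⁻¹' C : Set (affineSpan ℝ C)) := interior_subset (hball this)
  exact h2

lemma memPPhi_iff {n : ℕ} {X : Set (EuclideanSpace ℝ (Fin n))} {m : ℕ} {Φ : X → Fin m → ℝ}
    (hΦ : Continuous Φ) (P : Measure X) : MemPPhi P Φ ↔ Integrable Φ P := by
  have hc : ∀ i, Continuous fun x => Φ x i := fun i => (continuous_apply i).comp hΦ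
  have h1 : MemPPhi P Φ ↔ Integrable (fun x => ∑ i, |Φ x i|) P := by
    unfold MemPPhi
    rw [← lintegral_ofReal_ne_top_iff_integrable, lt_top_iff_ne_top]
    · exact (continuous_finsetSum _ fun i _ => (hc i).abs).aestronglyMeasurable
    · exact Filter.Eventually.of_forall fun x => Finset.sum_nonneg fun i _ => abs_nonneg _
  rw [h1]
  constructor
  · intro h
    refine h.mono hΦ.aestronglyMeasurable (Filter.Eventually.of_forall fun x => ?_)
    have hs : 0 ≤ ∑ i, |Φ x i| := Finset.sum_nonneg fun i _ => abs_nonneg _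
    rw [Real.norm_of_nonneg hs, pi_norm_le_iff_of_nonneg hs]
    intro i
    exact Finset.single_le_sum (f := fun i => |Φ x i|) (fun i _ => abs_nonneg _)
      (Finset.mem_univ i)
  · intro h
    exact integrable_finsetSum _ fun i _ => (h.eval i).abs

lemma mem_iff_good {n : ℕ} {X : Set (EuclideanSpace ℝ (Fin n))} {m : ℕ} {Φ : X → Fin m → ℝ}
    {H : Set (Measure X)} (h : IsConstraint H Φ) (P : Measure X) : P ∈ H ↔ GoodM Φ P 0 := by
  rw [h.2, mem_setOf_eq, memPPhi_iff h.1, GoodM]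

/-- for a properly constrained hypothesis, a finite (nonempty) union of
matching sets is a matching set, and every finite subset of `X` is contained in a finite
matching set. -/
theorem statement16 {n : ℕ} {X : Set (EuclideanSpace ℝ (Fin n))}
    (hXc : IsClosed X) (hXne : X.Nonempty)
    (H : Set (Measure X)) (hHne : H.Nonempty) (hpc : ProperlyConstrained H) :
    (∀ (k : ℕ) (S : Fin (k + 1) → Set X), (∀ i, IsMatchingSet H (S i)) →
        IsMatchingSet H (⋃ i, S i)) ∧
    (∀ F : Set X, F.Finite → ∃ S : Set X, IsMatchingSet H S ∧ S.Finite ∧ F ⊆ S) := by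
  obtain ⟨m, Φ, hΦ, h0⟩ := hpc
  have hunion : ∀ S T : Set X, IsMatchingSet H S → IsMatchingSet H T →
      IsMatchingSet H (S ∪ T) := by
    rintro S T ⟨hS, P, hP, hPS⟩ ⟨hT, Q, hQ, hQT⟩
    rw [mem_iff_good hΦ] at hP hQ
    have hh : (0 : ℝ) < 1 / 2 := by norm_num
    have hmix := hP.mix hQ hh hh (by norm_num)
    rw [smul_zero, add_zero] at hmix
    refine ⟨hS.union hT, _, (mem_iff_good hΦ _).2 hmix, ?_⟩
    · rw [msupp_mix _ _ _ _ (by simp) (by simp), hPS, hQT]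
  have hpt : ∀ x : X, ∃ S : Set X, IsMatchingSet H S ∧ S.Finite ∧ x ∈ S := by
    intro x
    obtain ⟨t, ht, htC⟩ := relint_neg h0 (subset_convexHull ℝ _ (mem_range_self x))
    obtain ⟨Q, hQ, hQf⟩ := goodM_hull htC
    have ht1 : 0 < 1 + t := by linarith
    have ha : 0 < t / (1 + t) := by positivity
    have hb : 0 < 1 / (1 + t) := by positivity
    have hmix := (goodM_dirac (Φ := Φ) x).mix hQ ha hb (by field_simp; ring)
    have hz : (t / (1 + t)) • Φ x + (1 / (1 + t)) • -(t • Φ x) = 0 := by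
      rw [smul_neg, smul_smul, div_mul_eq_mul_div, one_mul, add_neg_cancel]
    rw [hz] at hmix
    have hs := msupp_mix (Measure.dirac x) Q (ENNReal.ofReal (t / (1 + t)))
      (ENNReal.ofReal (1 / (1 + t))) (by simpa using ha) (by simpa using ht1)
    rw [msupp_dirac] at hs
    have hf : ({x} ∪ msupport Q).Finite := (finite_singleton x).union hQf
    exact ⟨_, ⟨hf.isClosed, _, (mem_iff_good hΦ _).2 hmix, hs⟩, hf, Or.inl rfl⟩
  refine ⟨?_, ?_⟩
  · intro k
    induction k with
    | zero =>
      intro S hS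
      have : (⋃ i, S i) = S 0 := by
        ext x; simp
      rw [this]
      exact hS 0
    | succ k ih =>
      intro S hS
      have : (⋃ i, S i) = S 0 ∪ ⋃ i : Fin (k + 1), S i.succ := by
        ext x
        simp only [mem_iUnion, mem_union]
        exact Fin.exists_fin_succ
      rw [this]
      exact hunion _ _ (hS 0) (ih _ fun i => hS _)
  · intro F hF
    induction F, hF using Set.Finite.induction_on with
    | empty =>
      obtain ⟨x, hx⟩ := hXne
      obtain ⟨S, h1, h2, -⟩ := hpt ⟨x, hx⟩
      exact ⟨S, h1, h2, empty_subset _⟩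
    | insert _ _ ih =>
      rename_i a s _ _
      obtain ⟨S, h1, h2, h3⟩ := ih
      obtain ⟨T, k1, k2, k3⟩ := hpt a
      exact ⟨T ∪ S, hunion _ _ k1 h1, k2.union h2,
        insert_subset (Or.inl k3) (h3.trans subset_union_right)⟩
end

section
/- Let X be a nonempty closed subset of ℝⁿ, H a properly constrained hypothesis on X, and Φ : X → ℝᵐ a constraint for H. Then Φ is a minimal constraint (0 lies in the interior of the convex hull of Φ(X)) if and only if Λ_Φ = {λ ∈ ℝᵐ : sup_{x∈X} λ·Φ(x) ≤ 1} is compact. More precisely, Φ is minimal if and only if there exists a finite matching set S* ⊆ X such that Λ_{Φ|S*} = {λ ∈ ℝᵐ : sup_{x∈S*} λ·Φ(x) ≤ 1} is compact; and if such S* exists, then Λ_{Φ|S} is compact for every S ⊆ X containing S*, and every closed S ⊆ X containing S* is a matching set for H. -/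
open MeasureTheory Set ENNReal

theorem aux_eq_sum {m : ℕ} (f : (Fin m → ℝ) →ₗ[ℝ] ℝ) (y : Fin m → ℝ) :
    f y = ∑ i, f (Pi.single i 1) * y i := by
  conv_lhs => rw [LinearMap.pi_apply_eq_sum_univ f y]
  refine Finset.sum_congr rfl fun i _ => ?_
  rw [smul_eq_mul, mul_comm]
  congr 2
  funext j
  simp [Pi.single_apply, eq_comm]

theorem aux_closed {Y : Type*} {m : ℕ} (Φ : Y → Fin m → ℝ) (S : Set Y) :
    IsClosed {l : Fin m → ℝ | ∀ x ∈ S, ∑ i, l i * Φ x i ≤ 1} := by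
  simp only [Set.ofPred_forall]
  refine isClosed_biInter fun x _ => isClosed_le (by fun_prop) (by fun_prop)

/-- separation of `0` from the convex hull of a nonempty set -/
theorem aux_sep {m : ℕ} (C : Set (Fin m → ℝ)) (hC : C.Nonempty)
    (h0 : (0 : Fin m → ℝ) ∉ interior (convexHull ℝ C)) :
    ∃ f : (Fin m → ℝ) →ₗ[ℝ] ℝ, f ≠ 0 ∧ ∀ y ∈ C, f y ≤ 0 := by
  by_cases hi : (interior (convexHull ℝ C)).Nonempty
  · obtain ⟨f, hf, h⟩ := geometric_hahn_banach_of_nonempty_interior_point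
      (convex_convexHull ℝ C) h0 hi
    refine ⟨f.toLinearMap, ?_, fun y hy => ?_⟩
    · intro h'
      apply hf
      ext1 y
      exact LinearMap.congr_fun h' y
    · simpa using h y (subset_convexHull ℝ C hy)
  · rw [interior_convexHull_nonempty_iff_affineSpan_eq_top] at hi
    have hne : (affineSpan ℝ C : Set (Fin m → ℝ)).Nonempty := hC.mono (subset_affineSpan ℝ C)
    have hd : vectorSpan ℝ C < ⊤ := by
      rw [lt_top_iff_ne_top]
      intro h
      rw [← direction_affineSpan, AffineSubspace.direction_eq_top_iff_of_nonempty hne] at h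
      exact hi h
    obtain ⟨f, hf, hk⟩ := Submodule.exists_le_ker_of_lt_top _ hd
    obtain ⟨c, hc⟩ := hC
    have key : ∀ y ∈ C, f y = f c := by
      intro y hy
      have := hk (vsub_mem_vectorSpan ℝ hy hc)
      rw [LinearMap.mem_ker, vsub_eq_sub, map_sub] at this
      linarith
    by_cases hs : f c ≤ 0
    · exact ⟨f, hf, fun y hy => by rw [key y hy]; exact hs⟩
    · refine ⟨-f, neg_ne_zero.2 hf, fun y hy => ?_⟩
      rw [LinearMap.neg_apply, key y hy]
      linarith

theorem aux_compact_iff {Y : Type*} {m : ℕ} (Φ : Y → Fin m → ℝ) (S : Set Y) (hS : S.Nonempty) :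
    (0 : Fin m → ℝ) ∈ interior (convexHull ℝ (Φ '' S)) ↔
      IsCompact {l : Fin m → ℝ | ∀ x ∈ S, ∑ i, l i * Φ x i ≤ 1} := by
  constructor
  · intro h
    refine Metric.isCompact_of_isClosed_isBounded (aux_closed Φ S) ?_
    rw [mem_interior_iff_mem_nhds, Metric.mem_nhds_iff] at h
    obtain ⟨r, hr, hb⟩ := h
    rw [isBounded_iff_forall_norm_le]
    refine ⟨2 / r, fun l hl => ?_⟩
    have hconv : ∀ y ∈ convexHull ℝ (Φ '' S), ∑ i, l i * y i ≤ 1 := by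
      have hcv : Convex ℝ {y : Fin m → ℝ | ∑ i, l i * y i ≤ 1} := by
        refine convex_halfSpace_le ⟨fun a b => ?_, fun c a => ?_⟩ 1
        · simp [mul_add, Finset.sum_add_distrib]
        · simp only [Pi.smul_apply, smul_eq_mul, Finset.mul_sum]
          exact Finset.sum_congr rfl fun i _ => by ring
      intro y hy
      refine convexHull_min ?_ hcv hy
      rintro _ ⟨x, hx, rfl⟩
      exact hl x hx
    rw [pi_norm_le_iff_of_nonneg (by positivity)]
    intro i
    have hs : ∀ s : ℝ, |s| < r → l i * s ≤ 1 := by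
      intro s hs
      have := hconv (Pi.single i s) (hb (by simpa [Pi.norm_single] using hs))
      simpa [Pi.single_apply] using this
    have h1 := hs (r / 2) (by rw [abs_of_pos (by positivity)]; linarith)
    have h2 := hs (-(r / 2)) (by rw [abs_neg, abs_of_pos (by positivity)]; linarith)
    rw [Real.norm_eq_abs, abs_le]
    constructor
    · rw [neg_le, le_div_iff₀ hr]; linarith
    · rw [le_div_iff₀ hr]; linarith
  · intro hcomp
    by_contra h0
    obtain ⟨f, hf, hle⟩ := aux_sep (Φ '' S) (hS.image Φ) h0
    obtain ⟨B, hB⟩ := (isBounded_iff_forall_norm_le.1 hcomp.isBounded)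
    apply hf
    have hmem : ∀ t : ℝ, 0 ≤ t → ∀ i, |t * f (Pi.single i 1)| ≤ B := by
      intro t ht i
      have := hB (fun i => t * f (Pi.single i 1)) (by
        intro x hx
        have h1 := hle _ ⟨x, hx, rfl⟩
        rw [aux_eq_sum] at h1
        simp only [mul_assoc]
        rw [← Finset.mul_sum]
        have := mul_nonpos_of_nonneg_of_nonpos ht h1
        linarith)
      exact (norm_le_pi_norm _ i).trans this
    have hz : ∀ i, f (Pi.single i 1) = 0 := by
      intro i
      by_contra hne
      have hp : 0 < |f (Pi.single i 1)| := abs_pos.2 hne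
      have hB0 : 0 ≤ B := (abs_nonneg _).trans (hmem 0 le_rfl i)
      have := hmem ((B + 1) / |f (Pi.single i 1)|) (by positivity) i
      rw [abs_mul, abs_of_nonneg (by positivity), div_mul_cancel₀ _ hp.ne'] at this
      linarith
    refine LinearMap.ext fun y => ?_
    rw [aux_eq_sum]
    simp [hz]

theorem aux_finite {Y : Type*} [Nonempty Y] {m : ℕ} (Φ : Y → Fin m → ℝ)
    (h : (0 : Fin m → ℝ) ∈ interior (convexHull ℝ (Set.range Φ))) :
    ∃ T : Set Y, T.Finite ∧ (0 : Fin m → ℝ) ∈ interior (convexHull ℝ (Φ '' T)) := by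
  obtain ⟨b, hb1, hb2⟩ := exists_mem_interior_convexHull_affineBasis
    (mem_interior_iff_mem_nhds.1 h)
  have : ∀ i, ∃ T : Set Y, T.Finite ∧ b i ∈ convexHull ℝ (Φ '' T) := by
    intro i
    have hi : b i ∈ convexHull ℝ (Set.range Φ) :=
      hb2 (subset_convexHull ℝ _ (Set.mem_range_self i))
    rw [convexHull_eq_union_convexHull_finite_subsets] at hi
    simp only [Set.mem_iUnion] at hi
    obtain ⟨t, ht, hit⟩ := hi
    obtain ⟨T, hT, hTt⟩ : ∃ T : Set Y, T.Finite ∧ Φ '' T = t := by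
      choose! g hg using fun y (hy : y ∈ (t : Set (Fin m → ℝ))) => ht hy
      refine ⟨g '' t, t.finite_toSet.image g, ?_⟩
      rw [Set.image_image]
      exact (Set.image_congr hg).trans (Set.image_id' _)
    exact ⟨T, hT, by rwa [hTt]⟩
  choose T hT hbT using this
  refine ⟨⋃ i, T i, Set.finite_iUnion hT, ?_⟩
  refine interior_mono (convexHull_min ?_ (convex_convexHull ℝ _)) hb1
  rintro _ ⟨i, rfl⟩
  exact convexHull_mono (Set.image_mono (Set.subset_iUnion T i)) (hbT i)

/-- points of the convex hull are means of probability measures living on `S` -/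
theorem aux_mean {Y : Type*} [MeasurableSpace Y] {m : ℕ} (Φ : Y → Fin m → ℝ)
    (hΦ : StronglyMeasurable Φ) (S : Set Y) (hS : MeasurableSet S) (y : Fin m → ℝ)
    (hy : y ∈ convexHull ℝ (Φ '' S)) :
    ∃ D : Measure Y, IsProbabilityMeasure D ∧ D Sᶜ = 0 ∧ Integrable Φ D ∧ ∫ x, Φ x ∂D = y := by
  refine convexHull_min (t := {y | ∃ D : Measure Y, IsProbabilityMeasure D ∧ D Sᶜ = 0 ∧
    Integrable Φ D ∧ ∫ x, Φ x ∂D = y}) ?_ ?_ hy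
  · rintro _ ⟨x, hx, rfl⟩
    refine ⟨Measure.dirac x, inferInstance, ?_, ?_, ?_⟩
    · rw [Measure.dirac_apply' _ hS.compl]
      simp [hx]
    · exact integrable_dirac' hΦ (by simp)
    · exact integral_dirac' _ _ hΦ
  · rintro _ ⟨D1, p1, z1, i1, rfl⟩ _ ⟨D2, p2, z2, i2, rfl⟩ a b ha hb hab
    refine ⟨ENNReal.ofReal a • D1 + ENNReal.ofReal b • D2, ⟨?_⟩, ?_, ?_, ?_⟩
    · simp [← ENNReal.ofReal_add ha hb, hab]
    · simp [z1, z2]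
    · exact (i1.smul_measure (by simp)).add_measure (i2.smul_measure (by simp))
    · rw [integral_add_measure (i1.smul_measure (by simp)) (i2.smul_measure (by simp)),
        integral_smul_measure, integral_smul_measure, ENNReal.toReal_ofReal ha,
        ENNReal.toReal_ofReal hb]

/-- a finite measure with support containing `S`, living on `S`, integrating `Φ` -/
theorem aux_full {Y : Type*} [TopologicalSpace Y] [SecondCountableTopology Y]
    [MeasurableSpace Y] [BorelSpace Y] {m : ℕ} (Φ : Y → Fin m → ℝ)
    (hΦ : StronglyMeasurable Φ) (S : Set Y) (hS : IsClosed S) (hne : S.Nonempty) :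
    ∃ Q : Measure Y, IsFiniteMeasure Q ∧ Q Sᶜ = 0 ∧ Integrable Φ Q ∧ S ⊆ msupport Q := by
  have : Nonempty S := hne.to_subtype
  let u : ℕ → S := TopologicalSpace.denseSeq S
  obtain ⟨δ, hδ, hsum⟩ := ENNReal.exists_pos_tsum_mul_lt_of_countable (ε := 1) one_ne_zero
    (fun k : ℕ => 1 + ‖Φ (u k)‖ₑ) (fun k => by simp)
  let Q : Measure Y := Measure.sum fun k => (δ k : ℝ≥0∞) • Measure.dirac (u k : Y)
  have hfin : Q univ < ⊤ := by
    simp only [Q, Measure.sum_apply _ MeasurableSet.univ, Measure.smul_apply, measure_univ,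
      smul_eq_mul, mul_one]
    refine lt_of_le_of_lt (ENNReal.tsum_le_tsum fun k => ?_) (hsum.trans ENNReal.one_lt_top)
    rw [add_mul, one_mul]
    exact le_self_add
  refine ⟨Q, ⟨hfin⟩, ?_, ⟨hΦ.aestronglyMeasurable, ?_⟩, ?_⟩
  · simp only [Q, Measure.sum_apply _ hS.measurableSet.compl, Measure.smul_apply,
      Measure.dirac_apply' _ hS.measurableSet.compl]
    simp
  · rw [HasFiniteIntegral, lintegral_sum_measure]
    refine lt_of_le_of_lt (ENNReal.tsum_le_tsum fun k => ?_) (hsum.trans ENNReal.one_lt_top)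
    rw [lintegral_smul_measure, lintegral_dirac' _ hΦ.enorm, smul_eq_mul, mul_comm]
    gcongr
    exact le_add_self
  · intro x hx U hU hxU
    have hd := TopologicalSpace.denseRange_denseSeq S
    obtain ⟨k, hk⟩ := hd.exists_mem_open (hU.preimage continuous_subtype_val) ⟨⟨x, hx⟩, hxU⟩
    have hk' : (u k : Y) ∈ U := hk
    have h1 := Measure.le_sum_apply (fun k => (δ k : ℝ≥0∞) • Measure.dirac (u k : Y)) U
    rw [pos_iff_ne_zero]
    intro h0
    have h2 : (δ k : ℝ≥0∞) * Measure.dirac (u k : Y) U ≤ Q U :=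
      (ENNReal.le_tsum k).trans h1
    rw [h0, Measure.dirac_apply' _ hU.measurableSet] at h2
    simp [hk', (hδ k).ne'] at h2

theorem aux_match {Y : Type*} [TopologicalSpace Y] [SecondCountableTopology Y]
    [MeasurableSpace Y] [BorelSpace Y] {m : ℕ} (Φ : Y → Fin m → ℝ)
    (hΦ : StronglyMeasurable Φ) (S : Set Y) (hS : IsClosed S)
    (h : (0 : Fin m → ℝ) ∈ interior (convexHull ℝ (Φ '' S))) :
    ∃ P : Measure Y, IsProbabilityMeasure P ∧ Integrable Φ P ∧ ∫ x, Φ x ∂P = 0 ∧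
      msupport P = S := by
  have hne : S.Nonempty := by
    have := convexHull_nonempty_iff.1 ⟨_, interior_subset h⟩
    exact this.of_image
  obtain ⟨Q, hQf, hQS, hQi, hQs⟩ := aux_full Φ hΦ S hS hne
  obtain ⟨ε, hε, hmem⟩ : ∃ ε : ℝ, 0 < ε ∧ -(ε • ∫ x, Φ x ∂Q) ∈ convexHull ℝ (Φ '' S) := by
    have hc : Filter.Tendsto (fun ε : ℝ => -(ε • ∫ x, Φ x ∂Q)) (nhdsWithin 0 (Ioi 0))
        (nhds 0) := by
      have : Continuous (fun ε : ℝ => -(ε • ∫ x, Φ x ∂Q)) := by fun_prop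
      have := this.tendsto 0
      simp only [zero_smul, neg_zero] at this
      exact this.mono_left nhdsWithin_le_nhds
    have h1 := hc.eventually (mem_interior_iff_mem_nhds.1 h)
    obtain ⟨ε, h2, h3⟩ := (h1.and self_mem_nhdsWithin).exists
    exact ⟨ε, h3, h2⟩
  obtain ⟨D, hDp, hDS, hDi, hDm⟩ := aux_mean Φ hΦ S hS.measurableSet _ hmem
  let Rm : Measure Y := ENNReal.ofReal ε • Q + D
  have hRi : Integrable Φ Rm := (hQi.smul_measure (by simp)).add_measure hDi
  have hR0 : ∫ x, Φ x ∂(Rm) = 0 := by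
    rw [integral_add_measure (hQi.smul_measure (by simp)) hDi, integral_smul_measure, hDm,
      ENNReal.toReal_ofReal hε.le, add_neg_cancel]
  have hRu : Rm univ ≠ ⊤ := by
    simp [Rm, ENNReal.mul_eq_top]
  have hRu0 : Rm univ ≠ 0 := by simp [Rm]
  have hRS : Rm Sᶜ = 0 := by simp [Rm, hQS, hDS]
  refine ⟨(Rm univ)⁻¹ • Rm, ⟨?_⟩, hRi.smul_measure (by simpa using hRu0), ?_, ?_⟩
  · simp only [Measure.smul_apply, smul_eq_mul]
    exact ENNReal.inv_mul_cancel hRu0 hRu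
  · rw [integral_smul_measure, hR0, smul_zero]
  · ext x
    constructor
    · intro hx
      by_contra hxS
      have := hx Sᶜ hS.isOpen_compl hxS
      simp [hRS] at this
    · intro hx U hU hxU
      have h1 := hQs hx U hU hxU
      have h2 : 0 < Rm U := by
        simp only [Rm, Measure.add_apply, Measure.smul_apply, smul_eq_mul]
        exact lt_of_lt_of_le (ENNReal.mul_pos (by simpa using hε) h1.ne') le_self_add
      simp only [Measure.smul_apply, smul_eq_mul]
      exact ENNReal.mul_pos (by simpa using hRu) h2.ne'

theorem aux_msupport_nonempty {Y : Type*} [TopologicalSpace Y] [SecondCountableTopology Y]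
    [MeasurableSpace Y] (P : Measure Y) [IsProbabilityMeasure P] : (msupport P).Nonempty := by
  by_contra hn
  have : P univ = 0 := by
    refine measure_null_of_locally_null univ fun x _ => ?_
    have hx : x ∉ msupport P := fun h => hn ⟨x, h⟩
    simp only [msupport, Set.mem_ofPred_eq, not_forall, not_lt, nonpos_iff_eq_zero] at hx
    obtain ⟨U, hU, hxU, h0⟩ := hx
    exact ⟨U, mem_nhdsWithin_of_mem_nhds (hU.mem_nhds hxU), h0⟩
  simp at this

/-- a constraint `Φ` of a properly constrained hypothesis is minimal iff
`Λ_Φ` is compact; more precisely, iff there is a finite matching set `S*` with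
`Λ_{Φ|S*}` compact; and if such `S*` exists then `Λ_{Φ|S}` is compact for every
`S ⊇ S*` and every closed `S ⊇ S*` is a matching set. -/
theorem statement17 {n m : ℕ} {X : Set (EuclideanSpace ℝ (Fin n))}
    (hXc : IsClosed X) (hXne : X.Nonempty)
    (H : Set (Measure X)) (hHne : H.Nonempty) (hpc : ProperlyConstrained H)
    (Φ : X → Fin m → ℝ) (hΦ : IsConstraint H Φ) :
    ((0 : Fin m → ℝ) ∈ interior (convexHull ℝ (Set.range Φ)) ↔
        IsCompact (LambdaSet Φ Set.univ)) ∧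
    ((0 : Fin m → ℝ) ∈ interior (convexHull ℝ (Set.range Φ)) ↔
        ∃ Sstar : Set X, IsMatchingSet H Sstar ∧ Sstar.Finite ∧
          IsCompact (LambdaSet Φ Sstar)) ∧
    (∀ Sstar : Set X, IsMatchingSet H Sstar → Sstar.Finite →
        IsCompact (LambdaSet Φ Sstar) →
      (∀ S : Set X, Sstar ⊆ S → IsCompact (LambdaSet Φ S)) ∧
      (∀ S : Set X, IsClosed S → Sstar ⊆ S → IsMatchingSet H S)) := by
  obtain ⟨hcont, hH⟩ := hΦ
  have : Nonempty X := hXne.to_subtype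
  have hsm : StronglyMeasurable Φ := hcont.stronglyMeasurable
  have hmatch : ∀ S : Set X, IsClosed S →
      (0 : Fin m → ℝ) ∈ interior (convexHull ℝ (Φ '' S)) → IsMatchingSet H S := by
    intro S hS h
    obtain ⟨P, hP, hi, h0, hs⟩ := aux_match Φ hsm S hS h
    refine ⟨hS, P, ?_, hs⟩
    rw [hH]
    refine ⟨hP, ?_, h0⟩
    have : Integrable (fun x => ∑ i, |Φ x i|) P :=
      integrable_finsetSum _ fun i _ => (hi.eval i).abs
    unfold MemPPhi
    exact this.lintegral_lt_top
  have hne : ∀ S : Set X, IsMatchingSet H S → S.Nonempty := by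
    rintro S ⟨-, P, hP, rfl⟩
    rw [hH] at hP
    have := hP.1
    exact aux_msupport_nonempty P
  have hmono : ∀ S T : Set X, S ⊆ T → IsCompact (LambdaSet Φ S) → IsCompact (LambdaSet Φ T) := by
    intro S T hST hc
    exact hc.of_isClosed_subset (aux_closed Φ T) fun l hl x hx => hl x (hST hx)
  have hA : (0 : Fin m → ℝ) ∈ interior (convexHull ℝ (Set.range Φ)) ↔
      IsCompact (LambdaSet Φ Set.univ) := by
    rw [← Set.image_univ]
    exact aux_compact_iff Φ univ univ_nonempty
  refine ⟨hA, ⟨fun h => ?_, ?_⟩, ?_⟩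
  · obtain ⟨T, hTf, hT⟩ := aux_finite Φ h
    have hTm := hmatch T hTf.isClosed hT
    exact ⟨T, hTm, hTf, (aux_compact_iff Φ T (hne T hTm)).1 hT⟩
  · rintro ⟨T, -, -, hc⟩
    exact hA.2 (hmono T univ (subset_univ T) hc)
  · intro T hTm hTf hc
    refine ⟨fun S hS => hmono T S hS hc, fun S hS hTS => hmatch S hS ?_⟩
    exact interior_mono (convexHull_mono (Set.image_mono hTS))
      ((aux_compact_iff Φ T (hne T hTm)).2 hc)
end

section
/- Let X be a nonempty closed subset of ℝⁿ, H a properly constrained hypothesis on X, and Φ : X → ℝᵐ a constraint for H, with dual e-class E_H^∨ = {1 − λ·Φ : λ ∈ Λ_Φ} where Λ_Φ = {λ ∈ ℝᵐ : sup_{x∈X} λ·Φ(x) ≤ 1}. Then every sequence (E_i)_{i≥1} of elements of E_H^∨ admits a subsequence converging pointwise on X to some element of E_H^∨. -/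
open MeasureTheory Set ENNReal

theorem aux_transfer {n m k : ℕ} {X : Set (EuclideanSpace ℝ (Fin n))}
    (H : Set (Measure X)) (Φ : X → Fin m → ℝ) (Ψ : X → Fin k → ℝ)
    (hΦ : IsConstraint H Φ) (hΨ : IsConstraint H Ψ)
    {ι : Type} [Fintype ι] (w : ι → ℝ) (hw : ∀ i, 0 ≤ w i) (hs : ∑ i, w i = 1) (y : ι → X)
    (h0 : ∑ i, w i • Ψ (y i) = 0) : ∑ i, w i • Φ (y i) = 0 := by
  classical
  let Q : Measure X := ∑ i, ENNReal.ofReal (w i) • Measure.dirac (y i)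
  have hint : ∀ {d : ℕ} (f : X → Fin d → ℝ), ∫ x, f x ∂Q = ∑ i, w i • f (y i) := by
    intro d f
    simp only [Q]
    rw [integral_finset_sum_measure]
    · refine Finset.sum_congr rfl fun i _ => ?_
      rw [integral_smul_measure, integral_dirac, ENNReal.toReal_ofReal (hw i)]
    · intro i _
      exact (integrable_dirac (by simp)).smul_measure ENNReal.ofReal_ne_top
  have hprob : IsProbabilityMeasure Q := by
    constructor
    simp only [Q, Measure.coe_finset_sum, Finset.sum_apply, Measure.smul_apply, measure_univ,
      smul_eq_mul, mul_one]
    rw [← ENNReal.ofReal_sum_of_nonneg (fun i _ => hw i), hs, ENNReal.ofReal_one]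
  have hmem : MemPPhi Q Ψ := by
    unfold MemPPhi
    simp only [Q]
    rw [lintegral_finset_sum_measure]
    simp only [lintegral_smul_measure, lintegral_dirac, smul_eq_mul]
    exact ENNReal.sum_lt_top.2 fun i _ => ENNReal.mul_lt_top ENNReal.ofReal_lt_top ENNReal.ofReal_lt_top
  have hQ : Q ∈ H := by
    rw [hΨ.2]
    exact ⟨hprob, hmem, by rw [hint, h0]⟩
  rw [hΦ.2] at hQ
  rw [← hint]
  exact hQ.2.2

theorem aux_ray {k : ℕ} {C : Set (Fin k → ℝ)}
    (h0 : (0 : Fin k → ℝ) ∈ intrinsicInterior ℝ C) (v : Fin k → ℝ) (hv : v ∈ C) :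
    ∃ ε : ℝ, 0 < ε ∧ (-ε) • v ∈ C := by
  obtain ⟨z, hz, hz0⟩ := mem_intrinsicInterior.1 h0
  have hA : ∀ t : ℝ, t • v ∈ affineSpan ℝ C := by
    intro t
    have := AffineMap.lineMap_mem (k := ℝ) (Q := affineSpan ℝ C) t (hz0 ▸ z.2) (subset_affineSpan ℝ C hv)
    simpa [AffineMap.lineMap_apply] using this
  let g : ℝ → affineSpan ℝ C := fun t => ⟨t • v, hA t⟩
  have hg : Continuous g := by
    apply Continuous.subtype_mk
    fun_prop
  have hg0 : g 0 = z := by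
    apply Subtype.ext
    simp [g, hz0]
  have hn : g ⁻¹' (interior ((↑) ⁻¹' C)) ∈ nhds (0 : ℝ) :=
    hg.continuousAt.preimage_mem_nhds (by rw [hg0]; exact isOpen_interior.mem_nhds hz)
  obtain ⟨ε, hε, hb⟩ := Metric.mem_nhds_iff.1 hn
  refine ⟨ε / 2, by positivity, ?_⟩
  have : (-(ε / 2)) ∈ Metric.ball (0 : ℝ) ε := by
    simp [abs_of_pos hε]; 
    linarith
  have h3 : g (-(ε / 2)) ∈ ((↑) ⁻¹' C : Set (affineSpan ℝ C)) := interior_subset (hb this)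
  exact h3

theorem aux_bound {n m : ℕ} {X : Set (EuclideanSpace ℝ (Fin n))}
    (H : Set (Measure X)) (hpc : ProperlyConstrained H)
    (Φ : X → Fin m → ℝ) (hΦ : IsConstraint H Φ) (x : X) :
    ∃ c : ℝ, ∀ l ∈ LambdaSet Φ Set.univ, c ≤ ∑ i, l i * Φ x i := by
  obtain ⟨k, Ψ, hΨ, h0⟩ := hpc
  obtain ⟨ε, hε, hm⟩ := aux_ray h0 (Ψ x) (subset_convexHull ℝ _ ⟨x, rfl⟩)
  obtain ⟨ι, hι, w, z, hw, hs, hz, hc⟩ := mem_convexHull_iff_exists_fintype.1 hm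
  choose y hy using hz
  have h1 : (0 : ℝ) < 1 + ε := by linarith
  have key := aux_transfer H Φ Ψ hΦ hΨ
    (ι := Option ι) (fun o => (1 + ε)⁻¹ * o.elim ε w)
    (by
      intro o
      cases o with
      | none => simp only [Option.elim]; positivity
      | some i => simp only [Option.elim]; exact mul_nonneg (by positivity) (hw i))
    (by
      rw [← Finset.mul_sum, Fintype.sum_option]
      simp only [Option.elim]
      rw [hs, add_comm ε 1, inv_mul_cancel₀ h1.ne'])
    (fun o => o.elim x y)
    (by
      simp only [mul_smul]
      rw [← Finset.smul_sum, Fintype.sum_option]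
      simp only [Option.elim, hy]
      rw [hc]
      simp)
  simp only [mul_smul] at key
  rw [← Finset.smul_sum, Fintype.sum_option] at key
  simp only [Option.elim] at key
  have key2 := (smul_eq_zero.1 key).resolve_left (inv_ne_zero h1.ne')
  refine ⟨-1 / ε, fun l hl => ?_⟩
  have h2 : ε * (∑ j, l j * Φ x j) + ∑ i, w i * ∑ j, l j * Φ (y i) j = 0 := by
    have h4 : ∑ j, l j * (ε • Φ x + ∑ i, w i • Φ (y i)) j = 0 := by
      rw [key2]; simp
    rw [← h4]
    simp only [Pi.add_apply, Finset.sum_apply, Pi.smul_apply, smul_eq_mul, mul_add,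
      Finset.sum_add_distrib, Finset.mul_sum]
    congr 1
    · exact Finset.sum_congr rfl fun j _ => by ring
    · rw [Finset.sum_comm]
      exact Finset.sum_congr rfl fun j _ => Finset.sum_congr rfl fun i _ => by ring
  have h3 : ∑ i, w i * ∑ j, l j * Φ (y i) j ≤ ∑ i, w i :=
    Finset.sum_le_sum fun i _ => mul_le_of_le_one_right (hw i) (hl (y i) trivial)
  rw [hs] at h3
  rw [div_le_iff₀ hε]
  linarith

/-- every sequence in the dual e-class of a properly constrained hypothesis
has a subsequence converging pointwise on `X` to an element of the dual e-class. -/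
theorem statement18 {n m : ℕ} {X : Set (EuclideanSpace ℝ (Fin n))}
    (hXc : IsClosed X) (hXne : X.Nonempty)
    (H : Set (Measure X)) (hHne : H.Nonempty) (hpc : ProperlyConstrained H)
    (Φ : X → Fin m → ℝ) (hΦ : IsConstraint H Φ)
    (E : ℕ → (X → ℝ)) (hE : ∀ i, E i ∈ dualClass Φ) :
    ∃ φ : ℕ → ℕ, StrictMono φ ∧ ∃ Elim ∈ dualClass Φ,
      ∀ x : X, Filter.Tendsto (fun i => E (φ i) x) Filter.atTop (nhds (Elim x)) := by
  choose c hc using aux_bound H hpc Φ hΦ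
  choose l hl hEl using hE
  let L : (Fin m → ℝ) →ₗ[ℝ] (X → ℝ) :=
    { toFun := fun l x => ∑ i, l i * Φ x i
      map_add' := by intro a b; ext x; simp [add_mul, Finset.sum_add_distrib]
      map_smul' := by intro a b; ext x; simp [Finset.mul_sum, mul_assoc] }
  let W := LinearMap.range L
  have hWc : IsClosed (W : Set (X → ℝ)) := W.closed_of_finiteDimensional
  have hfc : FirstCountableTopology W :=
    (ContinuousLinearEquiv.ofFinrankEq (𝕜 := ℝ) (E := W) (F := Fin (Module.finrank ℝ W) → ℝ)
      (by simp)).toHomeomorph.isInducing.firstCountableTopology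
  have hK : IsCompact (((↑) : W → X → ℝ) ⁻¹' (Set.pi Set.univ fun x => Set.Icc (c x) 1)) :=
    hWc.isClosedEmbedding_subtypeVal.isCompact_preimage
      (isCompact_univ_pi fun x => isCompact_Icc)
  obtain ⟨f, hf, φ, hφ, hlim⟩ := hK.tendsto_subseq
    (x := fun i => (⟨L (l i), l i, rfl⟩ : W))
    (fun i x _ => ⟨hc x _ (hl i), hl i x trivial⟩)
  obtain ⟨l0, hl0⟩ := f.2
  have hl0' : ∀ x, (f : X → ℝ) x = ∑ i, l0 i * Φ x i := fun x => by rw [← hl0]; rfl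
  refine ⟨φ, hφ, fun x => 1 - ∑ i, l0 i * Φ x i, ⟨l0, ?_, rfl⟩, ?_⟩
  · intro x _
    rw [← hl0']
    exact (hf x trivial).2
  · intro x
    have h1 := tendsto_pi_nhds.1 ((continuous_subtype_val.tendsto f).comp hlim) x
    have h2 := h1.const_sub 1
    simp only [hEl]
    rw [hl0'] at h2
    exact h2
end

section
/- Let X be a nonempty closed subset of ℝⁿ, H a properly constrained hypothesis on X, and Φ : X → ℝᵐ a constraint for H, with dual e-class E_H^∨ = {1 − λ·Φ : λ ∈ Λ_Φ} where Λ_Φ = {λ ∈ ℝᵐ : sup_{x∈X} λ·Φ(x) ≤ 1}. Then for every countable set S ⊆ X and every e-variable E ∈ E_H, there exists E' ∈ E_H^∨ such that E'(x) ≥ E(x) for every x ∈ S. -/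
open MeasureTheory Set ENNReal

/-- The finitely supported measure with weights `w`. -/
noncomputable def finMeas {Y : Type*} [MeasurableSpace Y] (w : Y →₀ ℝ) : Measure Y :=
  ∑ x ∈ w.support, ENNReal.ofReal (w x) • Measure.dirac x

lemma lintegral_finMeas {Y : Type*} [MeasurableSpace Y] [MeasurableSingletonClass Y]
    (w : Y →₀ ℝ) (f : Y → ℝ≥0∞) :
    ∫⁻ x, f x ∂(finMeas w) = ∑ x ∈ w.support, ENNReal.ofReal (w x) * f x := by
  simp [finMeas, lintegral_finsetSum_measure, lintegral_smul_measure]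

lemma integral_finMeas {Y : Type*} [MeasurableSpace Y] [MeasurableSingletonClass Y] {k : ℕ}
    (w : Y →₀ ℝ) (hw : ∀ x, 0 ≤ w x) (f : Y → Fin k → ℝ) :
    ∫ x, f x ∂(finMeas w) = Finsupp.linearCombination ℝ f w := by
  unfold finMeas
  rw [integral_finsetSum_measure]
  · simp [Finsupp.linearCombination_apply, Finsupp.sum, integral_smul_measure, hw]
  · intro i _
    exact (integrable_dirac (by simp)).smul_measure (by simp)

lemma finMeas_mem_iff {Y : Type*} [TopologicalSpace Y] [MeasurableSpace Y] {X : Set Y}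
    [MeasurableSingletonClass X] {k : ℕ}
    {H : Set (Measure X)} {Φ : X → Fin k → ℝ} (hΦ : IsConstraint H Φ)
    (w : X →₀ ℝ) (hw : ∀ x, 0 ≤ w x) (h1 : ∑ x ∈ w.support, w x = 1) :
    finMeas w ∈ H ↔ Finsupp.linearCombination ℝ Φ w = 0 := by
  rw [hΦ.2]
  simp only [Set.mem_ofPred_eq, integral_finMeas w hw]
  refine ⟨fun h => h.2.2, fun h => ⟨⟨?_⟩, ?_, h⟩⟩
  · rw [← lintegral_one, lintegral_finMeas]
    simp only [mul_one]
    rw [← ENNReal.ofReal_sum_of_nonneg (fun i _ => hw i), h1, ENNReal.ofReal_one]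
  · unfold MemPPhi
    rw [lintegral_finMeas]
    exact ENNReal.sum_lt_top.2 fun i _ => ENNReal.mul_lt_top (by simp) (by simp)

lemma weights_normalize {Y : Type*} (w : Y →₀ ℝ) (hw : ∀ x, 0 ≤ w x) (h0 : w ≠ 0) :
    ∃ c : ℝ, 0 < c ∧ (∀ x, 0 ≤ (c • w) x) ∧ ∑ x ∈ (c • w).support, (c • w) x = 1 := by
  have hpos : 0 < ∑ x ∈ w.support, w x := by
    apply Finset.sum_pos
    · intro i hi
      exact lt_of_le_of_ne (hw i) (Ne.symm (Finsupp.mem_support_iff.1 hi))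
    · exact Finsupp.support_nonempty_iff.2 h0
  refine ⟨(∑ x ∈ w.support, w x)⁻¹, inv_pos.2 hpos, fun x => ?_, ?_⟩
  · exact mul_nonneg (inv_pos.2 hpos).le (hw x)
  · rw [Finsupp.support_smul_eq (inv_pos.2 hpos).ne']
    simp only [Finsupp.smul_apply, smul_eq_mul, ← Finset.mul_sum]
    exact inv_mul_cancel₀ hpos.ne'

lemma transfer_zero {Y : Type*} [TopologicalSpace Y] [MeasurableSpace Y] {X : Set Y}
    [MeasurableSingletonClass X] {k m : ℕ}
    {H : Set (Measure X)} {Φ : X → Fin k → ℝ} {Ψ : X → Fin m → ℝ}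
    (hΦ : IsConstraint H Φ) (hΨ : IsConstraint H Ψ)
    (w : X →₀ ℝ) (hw : ∀ x, 0 ≤ w x) (h : Finsupp.linearCombination ℝ Ψ w = 0) :
    Finsupp.linearCombination ℝ Φ w = 0 := by
  by_cases h0 : w = 0
  · simp [h0]
  obtain ⟨c, hc, h1, h2⟩ := weights_normalize w hw h0
  have := (finMeas_mem_iff hΦ _ h1 h2).1 ((finMeas_mem_iff hΨ _ h1 h2).2 (by simp [h]))
  rw [map_smul] at this
  exact (smul_eq_zero.1 this).resolve_left hc.ne'

lemma evar_le {Y : Type*} [TopologicalSpace Y] [MeasurableSpace Y] {X : Set Y}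
    [MeasurableSingletonClass X] {k : ℕ}
    {H : Set (Measure X)} {Φ : X → Fin k → ℝ} (hΦ : IsConstraint H Φ)
    {E : X → ℝ} (hE : IsEVar H E)
    (w : X →₀ ℝ) (hw : ∀ x, 0 ≤ w x) (h : Finsupp.linearCombination ℝ Φ w = 0) :
    Finsupp.linearCombination ℝ (fun x => E x - 1) w ≤ 0 := by
  by_cases h0 : w = 0
  · simp [h0]
  obtain ⟨c, hc, h1, h2⟩ := weights_normalize w hw h0
  have h3 := hE.2.2 _ ((finMeas_mem_iff hΦ _ h1 h2).2 (by simp [h]))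
  rw [lintegral_finMeas] at h3
  simp_rw [← ENNReal.ofReal_mul (h1 _)] at h3
  rw [← ENNReal.ofReal_sum_of_nonneg (fun i _ => mul_nonneg (h1 i) (hE.2.1 i)),
    ENNReal.ofReal_le_one] at h3
  have h4 : Finsupp.linearCombination ℝ (fun x => E x - 1) (c • w) ≤ 0 := by
    rw [Finsupp.linearCombination_apply, Finsupp.sum]
    simp only [smul_eq_mul, mul_sub, mul_one, Finset.sum_sub_distrib]
    linarith
  rw [map_smul, smul_eq_mul] at h4
  exact nonpos_of_mul_nonpos_right h4 hc

lemma exists_weights {Y : Type*} {k : ℕ} (Ψ : Y → Fin k → ℝ)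
    (h : (0 : Fin k → ℝ) ∈ intrinsicInterior ℝ (convexHull ℝ (Set.range Ψ))) (x : Y) :
    ∃ w : Y →₀ ℝ, (∀ y, 0 ≤ w y) ∧ 0 < w x ∧ Finsupp.linearCombination ℝ Ψ w = 0 := by
  have hsub : convexHull ℝ (Set.range Ψ) ⊆
      {v | ∃ w : Y →₀ ℝ, (∀ y, 0 ≤ w y) ∧ Finsupp.linearCombination ℝ Ψ w = v} := by
    apply convexHull_min
    · rintro _ ⟨y, rfl⟩
      refine ⟨Finsupp.single y 1, fun z => ?_, by simp⟩
      have : (0 : Y →₀ ℝ) ≤ Finsupp.single y 1 := by simp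
      exact this z
    · rintro _ ⟨w, hw, rfl⟩ _ ⟨v, hv, rfl⟩ a b ha hb _
      refine ⟨a • w + b • v, fun y => ?_, by simp⟩
      exact add_nonneg (mul_nonneg ha (hw y)) (mul_nonneg hb (hv y))
  obtain ⟨y, hy, hy0⟩ := mem_intrinsicInterior.1 h
  let A := affineSpan ℝ (convexHull ℝ (Set.range Ψ))
  have h0A : (0 : Fin k → ℝ) ∈ A := hy0 ▸ y.2
  have hxA : Ψ x ∈ A := subset_affineSpan ℝ _ (subset_convexHull ℝ _ ⟨x, rfl⟩)
  let γ : ℝ → A := fun t => ⟨AffineMap.lineMap 0 (Ψ x) (-t), AffineMap.lineMap_mem _ h0A hxA⟩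
  have hγ : Continuous γ := by
    apply Continuous.subtype_mk
    simp only [AffineMap.lineMap_apply]
    fun_prop
  have hγ0 : γ 0 = y := by
    apply Subtype.ext
    simp [γ, hy0]
  have hev : ∀ᶠ t in nhds (0 : ℝ), γ t ∈ interior ((↑) ⁻¹' (convexHull ℝ (Set.range Ψ)) : Set A) :=
    hγ.continuousAt.eventually_mem (isOpen_interior.mem_nhds (hγ0.symm ▸ hy))
  have hev2 := (hev.filter_mono (nhdsWithin_le_nhds (s := Set.Ioi 0))).and self_mem_nhdsWithin
  obtain ⟨t, ht, ht0⟩ := hev2.exists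
  have ht' : (γ t : Fin k → ℝ) ∈ convexHull ℝ (Set.range Ψ) :=
    (interior_subset ht : γ t ∈ ((↑) ⁻¹' (convexHull ℝ (Set.range Ψ)) : Set A))
  obtain ⟨w, hw, hwt⟩ := hsub ht'
  have ht0 : 0 < t := ht0
  have hs : (0 : Y →₀ ℝ) ≤ Finsupp.single x t := by simp [ht0.le]
  refine ⟨w + Finsupp.single x t, fun z => add_nonneg (hw z) (hs z), ?_, ?_⟩
  · simp only [Finsupp.add_apply, Finsupp.single_eq_same]
    linarith [hw x]
  · rw [map_add, hwt]
    simp [γ, AffineMap.lineMap_apply]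

lemma exists_functional {Y : Type*} {k : ℕ} (Φ : Y → Fin k → ℝ) (F : Y → ℝ)
    (hpos : ∀ x, ∃ w : Y →₀ ℝ, (∀ y, 0 ≤ w y) ∧ 0 < w x ∧ Finsupp.linearCombination ℝ Φ w = 0)
    (hF : ∀ w : Y →₀ ℝ, (∀ y, 0 ≤ w y) → Finsupp.linearCombination ℝ Φ w = 0 →
      Finsupp.linearCombination ℝ F w ≤ 0) :
    ∃ μ : (Fin k → ℝ) →ₗ[ℝ] ℝ, ∀ x, F x ≤ μ (Φ x) := by
  let s : PointedCone ℝ (Y →₀ ℝ) :=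
    { carrier := {w | ∀ y, 0 ≤ w y}
      zero_mem' := fun y => le_rfl
      smul_mem' := fun c w hw y => mul_nonneg c.2 (hw y)
      add_mem' := fun hx hy y => add_nonneg (hx y) (hy y) }
  let T := Finsupp.linearCombination ℝ Φ
  let G := Finsupp.linearCombination ℝ F
  let f : (Y →₀ ℝ) →ₗ.[ℝ] ℝ := (-G).toPMap (LinearMap.ker T)
  obtain ⟨g, hg, hgs⟩ := riesz_extension s f
    (fun x hx => by
      have := hF x.1 hx (LinearMap.mem_ker.1 x.2)
      change 0 ≤ - G x.1
      exact neg_nonneg.2 this)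
    (fun y => by
      induction y using Finsupp.induction_linear with
      | zero => exact ⟨0, fun z => by simp⟩
      | add a b ha hb =>
        obtain ⟨u, hu⟩ := ha
        obtain ⟨v, hv⟩ := hb
        refine ⟨u + v, ?_⟩
        have := s.add_mem hu hv
        convert this using 1
        push_cast
        abel
      | single x a =>
        obtain ⟨w, hw, hwx, hw0⟩ := hpos x
        refine ⟨⟨(|a| / w x) • w, ?_⟩, ?_⟩
        · change T _ = 0
          rw [map_smul]
          simp [T, hw0]
        · intro z
          by_cases hz : z = x
          · subst hz
            have : |a| / w z * w z = |a| := div_mul_cancel₀ _ hwx.ne'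
            simp only [Finsupp.add_apply, Finsupp.smul_apply, smul_eq_mul, this,
              Finsupp.single_eq_same]
            linarith [neg_abs_le a]
          · simp only [Finsupp.add_apply, Finsupp.smul_apply, smul_eq_mul,
              Finsupp.single_eq_of_ne hz, add_zero]
            exact mul_nonneg (div_nonneg (abs_nonneg _) hwx.le) (hw z))
  have hmem : g + G ∈ (LinearMap.ker T).dualAnnihilator := by
    rw [Submodule.mem_dualAnnihilator]
    intro w hw
    have : g w = - G w := hg ⟨w, hw⟩
    simp [this]
  rw [← LinearMap.range_dualMap_eq_dualAnnihilator_ker] at hmem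
  obtain ⟨μ, hμ⟩ := hmem
  refine ⟨μ, fun x => ?_⟩
  have h1 := LinearMap.congr_fun hμ (Finsupp.single x 1)
  have h2 : 0 ≤ g (Finsupp.single x 1) := hgs _ (fun z => by
    have : (0 : Y →₀ ℝ) ≤ Finsupp.single x 1 := by simp
    exact this z)
  simp [T, G] at h1
  linarith

/-- for a properly constrained hypothesis, every e-variable is dominated on
any countable set `S ⊆ X` by an element of the dual e-class. -/
theorem statement19 {n m : ℕ} {X : Set (EuclideanSpace ℝ (Fin n))}
    (hXc : IsClosed X) (hXne : X.Nonempty)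
    (H : Set (Measure X)) (hHne : H.Nonempty) (hpc : ProperlyConstrained H)
    (Φ : X → Fin m → ℝ) (hΦ : IsConstraint H Φ)
    (S : Set X) (hS : S.Countable)
    (E : X → ℝ) (hE : IsEVar H E) :
    ∃ E' ∈ dualClass Φ, ∀ x ∈ S, E x ≤ E' x := by
  obtain ⟨k, Ψ, hΨ, hΨ0⟩ := hpc
  obtain ⟨μ, hμ⟩ := exists_functional Φ (fun x => E x - 1)
    (fun x => by
      obtain ⟨w, hw, hwx, hw0⟩ := exists_weights Ψ hΨ0 x
      exact ⟨w, hw, hwx, transfer_zero hΦ hΨ w hw hw0⟩)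
    (fun w hw h => evar_le hΦ hE w hw h)
  have hrep : ∀ v : Fin m → ℝ, ∑ i, (-μ (Pi.single i 1)) * v i = - μ v := by
    intro v
    rw [LinearMap.pi_apply_eq_sum_univ μ v, ← Finset.sum_neg_distrib]
    refine Finset.sum_congr rfl fun i _ => ?_
    have : (fun j => if i = j then (1 : ℝ) else 0) = Pi.single i 1 := by
      ext j
      simp [Pi.single_apply, eq_comm]
    rw [this, smul_eq_mul]
    ring
  refine ⟨_, ⟨fun i => -μ (Pi.single i 1), fun x _ => ?_, rfl⟩, fun x _ => ?_⟩
  · rw [hrep]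
    linarith [hμ x, hE.2.1 x]
  · simp only [hrep]
    linarith [hμ x]
end
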